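/- arXiv:2408.11146 — 2 statements merged into one kernel-verified Lean document; each statement's English description precedes it below -/
import Mathlib

section
/- For every ε-Markov chain with absorbing set A in which every state has a path (using regular edges and ε-edges) to A, and for every state i ∈ V and every S ⊆ A, the limit lim_{ε→0⁺} h_{iS}(ε) of the hitting probabilities exists. -/
/-!
For each small `ε > 0` the hitting probabilities `h i` are the unique solution of a linear system
whose entries are polynomials in `ε`; so `h i` is a rational function of `ε`, it takes values in
`[0, 1]`, and a bounded rational function has a limit at `0⁺`.

* Splitting off the first step of a path (`hitSum_step`), with a weight depending on the length of
  the path, gives both the first-step equations and, by induction on a length cutoff, the bound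
  `h i ≤ 1`. These sums are taken in `ℝ≥0∞`, where no summability is needed.
* The system matrix `I - P` (with the rows of `A` replaced by those of `I`) is invertible by the
  maximum principle (`hitMatrix_det_ne_zero`): the set where a kernel vector has maximal modulus is
  closed under edges, hence meets `A`, where the vector vanishes.
* Multiplying by the adjugate gives `h i * p(ε) = q(ε)` with polynomials `p`, `q`, `p(ε) ≠ 0`.
  Common factors `ε` are cancelled until `p(0) ≠ 0` (`exists_tendsto_of_mul_eval_eq`);
  boundedness of `h i` forces `q` to vanish at `0` whenever `p` does.
-/

open Filter Topology
open scoped Classical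

noncomputable section

/-- Product of transition weights along a path (given as the list of visited states). -/
def pathWeight {W : Type*} (M : W → W → ℝ) (l : List W) : ℝ :=
  ((l.zip l.tail).map fun p => M p.1 p.2).prod

/-- Row sums `t i = Σ_j c i j` of the ε-coefficients. -/
def rowT {V : Type*} [Fintype V] (c : V → V → ℝ) (i : V) : ℝ := ∑ j, c i j

/-- The transition matrix `P(ε) i j = (1 − ε·t i)·r i j + ε·c i j` of the ε-Markov chain. -/
def Pmat {V : Type*} [Fintype V] (r c : V → V → ℝ) (ε : ℝ) (i j : V) : ℝ :=
  (1 - ε * rowT c i) * r i j + ε * c i j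

/-- A path from `i` hitting `S`: `i = v₀, …, v_k` with `v_k ∈ S` and `v₀, …, v_{k−1} ∉ A`. -/
def IsHitPath {W : Type*} (A S : Set W) (i : W) (l : List W) : Prop :=
  l.head? = some i ∧ (∃ x ∈ S, l.getLast? = some x) ∧ ∀ p ∈ l.dropLast, p ∉ A

/-- The hitting probability of `S` from `i`: the sum over all finite paths
`i = v₀, …, v_k` with `v_k ∈ S` and `v₀, …, v_{k−1} ∉ A` of `Π_{m<k} M v_m v_{m+1}`. -/
def hitProb {W : Type*} (M : W → W → ℝ) (A S : Set W) (i : W) : ℝ :=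
  ∑' l : {l : List W // IsHitPath A S i l}, pathWeight M l.1

/-- A regular edge of the ε-Markov chain: positive regular coefficient. -/
def RegEdge {V : Type*} (r : V → V → ℝ) (a b : V) : Prop := 0 < r a b

/-- An ε-edge of the ε-Markov chain: zero regular coefficient, positive ε-coefficient. -/
def EpsEdge {V : Type*} (r c : V → V → ℝ) (a b : V) : Prop := r a b = 0 ∧ 0 < c a b

/-- A path from `i` to the absorbing set `A`, each step a regular edge or an ε-edge. -/
def IsPathToA {V : Type*} (r c : V → V → ℝ) (A : Set V) (i : V) (l : List V) : Prop :=
  l.head? = some i ∧ l.Chain' (fun a b => RegEdge r a b ∨ EpsEdge r c a b) ∧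
  ∃ x ∈ A, l.getLast? = some x

/-! ### Hitting sums in `ℝ≥0∞` -/

/-- The weight of `l` as an extended nonnegative real if `l` is a path from `i` hitting `S`, and `0`
otherwise. -/
def hitWeight {V : Type*} (M : V → V → ℝ) (A S : Set V) (i : V) (l : List V) : ENNReal :=
  if IsHitPath A S i l then ENNReal.ofReal (pathWeight M l) else 0

/-- The sum of the weights of all paths from `i` hitting `S`, where a path with `n` vertices is
counted with the factor `κ n`. -/
def hitSum {V : Type*} (M : V → V → ℝ) (A S : Set V) (κ : ℕ → ENNReal) (i : V) : ENNReal :=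
  ∑' l : List V, κ l.length * hitWeight M A S i l

lemma pathWeight_cons_cons {V : Type*} (M : V → V → ℝ) (a b : V) (l : List V) :
    pathWeight M (a :: b :: l) = M a b * pathWeight M (b :: l) := by
  simp [pathWeight]

lemma pathWeight_nonneg {V : Type*} {M : V → V → ℝ} (hM : ∀ i j, 0 ≤ M i j) (l : List V) :
    0 ≤ pathWeight M l := by
  refine List.prod_nonneg fun x hx => ?_
  obtain ⟨p, -, rfl⟩ := List.mem_map.1 hx
  exact hM _ _

lemma hitWeight_nil {V : Type*} (M : V → V → ℝ) (A S : Set V) (i : V) :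
    hitWeight M A S i [] = 0 := by
  simp [hitWeight, IsHitPath]

lemma hitWeight_cons_ne {V : Type*} (M : V → V → ℝ) (A S : Set V) {i a : V} (h : a ≠ i)
    (l : List V) : hitWeight M A S i (a :: l) = 0 := by
  simp [hitWeight, IsHitPath, h]

/-- Only lists with head `i` contribute to the sum over paths from `i`. -/
lemma hitSum_eq_tsum_cons {V : Type*} (M : V → V → ℝ) (A S : Set V) (κ : ℕ → ENNReal) (i : V) :
    hitSum M A S κ i = ∑' l : List V, κ (l.length + 1) * hitWeight M A S i (i :: l) := by
  have hinj : Function.Injective (fun l : List V => i :: l) := fun l l' h => by simpa using h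
  refine (hinj.tsum_eq (f := fun l => κ l.length * hitWeight M A S i l) ?_).symm
  intro l hl
  cases l with
  | nil => simp [hitWeight_nil] at hl
  | cons a l =>
    by_cases h : a = i
    · exact ⟨l, by simp [h]⟩
    · simp [hitWeight_cons_ne M A S h] at hl

lemma hitWeight_cons {V : Type*} [Fintype V] {M : V → V → ℝ} (hM : ∀ i j, 0 ≤ M i j)
    {A S : Set V} (hS : S ⊆ A) {i : V} (hi : i ∉ A) (l : List V) :
    hitWeight M A S i (i :: l) = ∑ j, ENNReal.ofReal (M i j) * hitWeight M A S j l := by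
  cases l with
  | nil =>
    have : i ∉ S := fun h => hi (hS h)
    simp [hitWeight, IsHitPath, this]
  | cons b l =>
    rw [Finset.sum_eq_single b]
    · have : IsHitPath A S i (i :: b :: l) ↔ IsHitPath A S b (b :: l) := by
        simp [IsHitPath, hi]
      simp only [hitWeight, this, pathWeight_cons_cons, ENNReal.ofReal_mul (hM i b), mul_ite,
        mul_zero]
    · intro j _ hj
      rw [hitWeight_cons_ne M A S (Ne.symm hj), mul_zero]
    · simp

/-- First-step analysis: removing the first vertex of a path shifts the length factor by one. -/
lemma hitSum_step {V : Type*} [Fintype V] {M : V → V → ℝ} (hM : ∀ i j, 0 ≤ M i j)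
    {A S : Set V} (hS : S ⊆ A) (κ : ℕ → ENNReal) {i : V} (hi : i ∉ A) :
    hitSum M A S κ i =
      ∑ j, ENNReal.ofReal (M i j) * hitSum M A S (fun n => κ (n + 1)) j := by
  rw [hitSum_eq_tsum_cons]
  simp only [hitSum, ← ENNReal.tsum_mul_left]
  rw [← Summable.tsum_finsetSum fun _ _ => ENNReal.summable]
  refine tsum_congr fun l => ?_
  rw [hitWeight_cons hM hS hi, Finset.mul_sum]
  exact Finset.sum_congr rfl fun j _ => by ring

/-- From an absorbing state the only possible path is the trivial one. -/
lemma hitSum_absorbing {V : Type*} (M : V → V → ℝ) {A : Set V} (S : Set V) (κ : ℕ → ENNReal)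
    {i : V} (hi : i ∈ A) : hitSum M A S κ i = κ 1 * if i ∈ S then 1 else 0 := by
  rw [hitSum_eq_tsum_cons, tsum_eq_single []]
  · simp [hitWeight, IsHitPath, pathWeight]
  · intro l hl
    cases l with
    | nil => exact absurd rfl hl
    | cons b l => simp [hitWeight, IsHitPath, hi]

/-- Paths with a bounded number of vertices have total weight at most `1`, by induction on the
bound. -/
lemma hitSum_cutoff_le_one {V : Type*} [Fintype V] {M : V → V → ℝ} (hM : ∀ i j, 0 ≤ M i j)
    (hM1 : ∀ i, ∑ j, M i j = 1) {A S : Set V} (hS : S ⊆ A) (n : ℕ) (i : V) :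
    hitSum M A S (fun m => if m ≤ n then 1 else 0) i ≤ 1 := by
  induction n generalizing i with
  | zero =>
    rw [hitSum_eq_tsum_cons]
    simp
  | succ n ih =>
    by_cases hi : i ∈ A
    · rw [hitSum_absorbing M S _ hi]
      split_ifs <;> simp
    · rw [hitSum_step hM hS _ hi]
      simp only [Nat.add_le_add_iff_right]
      calc ∑ j, ENNReal.ofReal (M i j) * hitSum M A S (fun m => if m ≤ n then 1 else 0) j
          ≤ ∑ j, ENNReal.ofReal (M i j) * 1 :=
            Finset.sum_le_sum fun j _ => mul_le_mul_right (ih j) _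
        _ = 1 := by
            simp only [mul_one]
            rw [← ENNReal.ofReal_sum_of_nonneg fun j _ => hM i j, hM1, ENNReal.ofReal_one]

/-- Every finite set of paths has bounded length, so the cutoff bound passes to the full sum. -/
lemma hitSum_le_one {V : Type*} [Fintype V] {M : V → V → ℝ} (hM : ∀ i j, 0 ≤ M i j)
    (hM1 : ∀ i, ∑ j, M i j = 1) {A S : Set V} (hS : S ⊆ A) (i : V) :
    hitSum M A S (fun _ => 1) i ≤ 1 := by
  rw [hitSum, ENNReal.tsum_eq_iSup_sum]
  refine iSup_le fun s => ?_
  refine le_trans ?_ (hitSum_cutoff_le_one hM hM1 hS (s.sup List.length) i)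
  refine le_trans (Finset.sum_le_sum fun l hl => ?_) (ENNReal.sum_le_tsum s)
  simp only [if_pos (Finset.le_sup (f := List.length) hl), le_refl]

lemma hitProb_eq_toReal {V : Type*} {M : V → V → ℝ} (hM : ∀ i j, 0 ≤ M i j)
    (A S : Set V) (i : V) : hitProb M A S i = (hitSum M A S (fun _ => 1) i).toReal := by
  have hfin : ∀ l, 1 * hitWeight M A S i l ≠ ⊤ := by
    intro l
    rw [one_mul, hitWeight]
    split_ifs <;> simp
  rw [hitSum, ENNReal.tsum_toReal_eq hfin]
  refine (tsum_subtype {l : List V | IsHitPath A S i l} (pathWeight M)).trans ?_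
  refine tsum_congr fun l => ?_
  rw [one_mul, hitWeight, Set.indicator_apply]
  by_cases h : IsHitPath A S i l
  · simp [h, ENNReal.toReal_ofReal (pathWeight_nonneg hM l)]
  · simp [h]

lemma hitProb_nonneg {V : Type*} {M : V → V → ℝ} (hM : ∀ i j, 0 ≤ M i j)
    (A S : Set V) (i : V) : 0 ≤ hitProb M A S i := by
  rw [hitProb_eq_toReal hM]
  exact ENNReal.toReal_nonneg

lemma hitProb_le_one {V : Type*} [Fintype V] {M : V → V → ℝ} (hM : ∀ i j, 0 ≤ M i j)
    (hM1 : ∀ i, ∑ j, M i j = 1) {A S : Set V} (hS : S ⊆ A) (i : V) :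
    hitProb M A S i ≤ 1 := by
  rw [hitProb_eq_toReal hM]
  exact ENNReal.toReal_le_of_le_ofReal zero_le_one (by simpa using hitSum_le_one hM hM1 hS i)

/-! ### The linear system for the hitting probabilities -/

/-- The matrix `I - Q`, where `Q` agrees with `M` in the rows outside `A` and vanishes in the rows
of `A`. The coefficient ring is arbitrary because the matrix is used over `ℝ` and over `ℝ[X]`. -/
def hitMatrix {V R : Type*} [CommRing R] (A : Set V) (M : V → V → R) : Matrix V V R :=
  Matrix.of fun i j => (if i = j then 1 else 0) - if i ∈ A then 0 else M i j

lemma hitMatrix_mulVec {V R : Type*} [Fintype V] [CommRing R] (A : Set V) (M : V → V → R)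
    (v : V → R) (i : V) :
    (hitMatrix A M).mulVec v i = v i - if i ∈ A then 0 else ∑ j, M i j * v j := by
  simp only [hitMatrix, Matrix.mulVec, dotProduct, Matrix.of_apply, sub_mul,
    Finset.sum_sub_distrib]
  by_cases h : i ∈ A <;> simp [h]

/-- The first-step equations in matrix form. -/
lemma hitMatrix_mulVec_hitProb {V : Type*} [Fintype V] {M : V → V → ℝ} (hM : ∀ i j, 0 ≤ M i j)
    (hM1 : ∀ i, ∑ j, M i j = 1) {A S : Set V} (hS : S ⊆ A) :
    (hitMatrix A M).mulVec (hitProb M A S) = fun i => if i ∈ S then 1 else 0 := by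
  funext i
  rw [hitMatrix_mulVec]
  by_cases hi : i ∈ A
  · rw [if_pos hi, sub_zero, hitProb_eq_toReal hM, hitSum_absorbing M S _ hi]
    split_ifs <;> simp
  · have hi' : i ∉ S := fun h => hi (hS h)
    have htop : ∀ j, hitSum M A S (fun _ => 1) j ≠ ⊤ := fun j =>
      ne_top_of_le_ne_top ENNReal.one_ne_top (hitSum_le_one hM hM1 hS j)
    rw [if_neg hi, if_neg hi', sub_eq_zero, hitProb_eq_toReal hM, hitSum_step hM hS _ hi,
      ENNReal.toReal_sum fun j _ => ENNReal.mul_ne_top ENNReal.ofReal_ne_top (htop j)]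
    refine Finset.sum_congr rfl fun j _ => ?_
    rw [ENNReal.toReal_mul, ENNReal.toReal_ofReal (hM i j), hitProb_eq_toReal hM]

/-- A property inherited along the edges of a path to `A` holds somewhere in `A`. -/
lemma exists_mem_of_isPathToA {V : Type*} {r c : V → V → ℝ} {A : Set V} {Q : V → Prop}
    (hQ : ∀ a b, Q a → RegEdge r a b ∨ EpsEdge r c a b → Q b) (l : List V) :
    ∀ i, IsPathToA r c A i l → Q i → ∃ x ∈ A, Q x := by
  induction l with
  | nil => rintro i ⟨h, -⟩; simp at h
  | cons a l ih =>
    rintro i ⟨h, hch, x, hx, hl⟩ hi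
    obtain rfl : a = i := by simpa using h
    cases l with
    | nil =>
      obtain rfl : a = x := by simpa using hl
      exact ⟨a, hx, hi⟩
    | cons b l =>
      obtain ⟨hab, hch⟩ := List.isChain_cons_cons.1 hch
      exact ih b ⟨rfl, hch, x, hx, by simpa using hl⟩ (hQ a b hi hab)

/-- Maximum principle: if every state has a path to `A` along which `M` is positive, then `I - Q`
is invertible. -/
lemma hitMatrix_det_ne_zero {V : Type*} [Fintype V] {r c M : V → V → ℝ} (hM : ∀ i j, 0 ≤ M i j)
    (hM1 : ∀ i, ∑ j, M i j = 1) {A : Set V}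
    (hpos : ∀ a b, RegEdge r a b ∨ EpsEdge r c a b → 0 < M a b)
    (hpath : ∀ i, ∃ l : List V, IsPathToA r c A i l) :
    (hitMatrix A M).det ≠ 0 := by
  intro hdet
  obtain ⟨v, hv0, hv⟩ := Matrix.exists_mulVec_eq_zero_iff.2 hdet
  have hA : ∀ i ∈ A, v i = 0 := by
    intro i hi
    have := congrFun hv i
    rw [hitMatrix_mulVec, if_pos hi] at this
    simpa using this
  have hT : ∀ i ∉ A, v i = ∑ j, M i j * v j := by
    intro i hi
    have := congrFun hv i
    rw [hitMatrix_mulVec, if_neg hi] at this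
    exact sub_eq_zero.1 this
  obtain ⟨k, hk⟩ := Function.ne_iff.1 hv0
  obtain ⟨m, -, hm⟩ := Finset.exists_max_image Finset.univ (fun i => |v i|) ⟨k, Finset.mem_univ k⟩
  have hmax : ∀ j, |v j| ≤ |v m| := fun j => hm j (Finset.mem_univ j)
  have hmpos : 0 < |v m| := lt_of_lt_of_le (abs_pos.2 hk) (hmax k)
  obtain ⟨l, hl⟩ := hpath m
  obtain ⟨x, hx, hxm⟩ := exists_mem_of_isPathToA (Q := fun i => |v i| = |v m|) (by
    intro a b ha hab
    have haA : a ∉ A := by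
      intro h
      rw [hA a h, abs_zero] at ha
      exact hmpos.ne ha
    -- An average of numbers at most `|v m|` equals `|v m|` only if each term of positive
    -- weight does.
    have hle : ∀ j ∈ Finset.univ, M a j * |v j| ≤ M a j * |v m| := fun j _ =>
      mul_le_mul_of_nonneg_left (hmax j) (hM a j)
    have hsum : ∑ j, M a j * |v j| = ∑ j, M a j * |v m| := by
      refine le_antisymm (Finset.sum_le_sum hle) ?_
      rw [← Finset.sum_mul, hM1, one_mul, ← ha, hT a haA]
      refine (Finset.abs_sum_le_sum_abs _ _).trans (le_of_eq ?_)
      exact Finset.sum_congr rfl fun j _ => by rw [abs_mul, abs_of_nonneg (hM a j)]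
    exact mul_left_cancel₀ (hpos a b hab).ne'
      ((Finset.sum_eq_sum_iff_of_le hle).1 hsum b (Finset.mem_univ b))) l m hl rfl
  rw [hA x hx, abs_zero] at hxm
  exact hmpos.ne hxm

/-! ### Bounded rational functions near `0⁺` -/

/-- If `0 ≤ h ≤ 1` and `h * p = q` near `0⁺` for polynomials `p ≠ 0` and `q`, then `h` has a limit
at `0⁺`. When `p` vanishes at `0`, so does `q`, because `h` is bounded, and a factor `X` cancels;
the induction is on a bound `n` for the degree of `p`. -/
lemma exists_tendsto_of_mul_eval_eq {h : ℝ → ℝ} (h0 : ∀ᶠ ε in 𝓝[>] (0 : ℝ), 0 ≤ h ε)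
    (h1 : ∀ᶠ ε in 𝓝[>] (0 : ℝ), h ε ≤ 1) (n : ℕ) :
    ∀ p q : Polynomial ℝ, p ≠ 0 → p.natDegree ≤ n →
      (∀ᶠ ε in 𝓝[>] (0 : ℝ), h ε * p.eval ε = q.eval ε) →
      ∃ L : ℝ, Tendsto h (𝓝[>] (0 : ℝ)) (𝓝 L) := by
  have hlim : ∀ p : Polynomial ℝ,
      Tendsto (fun ε => p.eval ε) (𝓝[>] (0 : ℝ)) (𝓝 (p.eval 0)) := fun p =>
    (p.continuous.tendsto 0).mono_left nhdsWithin_le_nhds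
  induction n with
  | zero =>
    intro p q hp hn hpq
    obtain ⟨a, rfl⟩ := Polynomial.natDegree_eq_zero.1 (Nat.le_zero.1 hn)
    have ha : a ≠ 0 := by simpa using hp
    refine ⟨q.eval 0 / a, ((hlim q).div_const a).congr' ?_⟩
    filter_upwards [hpq] with ε hε
    rw [← hε, Polynomial.eval_C, mul_div_cancel_right₀ _ ha]
  | succ n ih =>
    intro p q hp hn hpq
    by_cases hp0 : p.eval 0 = 0
    · have hq0 : q.eval 0 = 0 := by
        refine tendsto_nhds_unique ((hlim q).congr' ?_)
          (bdd_le_mul_tendsto_zero h0 h1 (hp0 ▸ hlim p))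
        filter_upwards [hpq] with ε hε using hε.symm
      rw [← Polynomial.coeff_zero_eq_eval_zero] at hp0 hq0
      obtain ⟨p', rfl⟩ := Polynomial.X_dvd_iff.2 hp0
      obtain ⟨q', rfl⟩ := Polynomial.X_dvd_iff.2 hq0
      have hp' : p' ≠ 0 := right_ne_zero_of_mul hp
      rw [Polynomial.natDegree_X_mul hp'] at hn
      refine ih p' q' hp' (by omega) ?_
      filter_upwards [hpq, self_mem_nhdsWithin] with ε hε hpos
      refine mul_left_cancel₀ (ne_of_gt hpos : ε ≠ 0) ?_
      simp only [Polynomial.eval_mul, Polynomial.eval_X] at hε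
      linarith
    · refine ⟨q.eval 0 / p.eval 0, ((hlim q).div (hlim p) hp0).congr' ?_⟩
      filter_upwards [hpq, (hlim p).eventually_ne hp0] with ε hε hne
      rw [Pi.div_apply, ← hε, mul_div_cancel_right₀ _ hne]

/-! ### The ε-Markov chain for small `ε` -/

/-- The transition matrix `P(ε)` as a matrix of polynomials in the variable `ε`. -/
def PmatPoly {V : Type*} [Fintype V] (r c : V → V → ℝ) (i j : V) : Polynomial ℝ :=
  (1 - Polynomial.X * Polynomial.C (rowT c i)) * Polynomial.C (r i j) +
    Polynomial.X * Polynomial.C (c i j)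

lemma mapMatrix_hitMatrix_PmatPoly {V : Type*} [Fintype V] (r c : V → V → ℝ) (A : Set V) (ε : ℝ) :
    (Polynomial.evalRingHom ε).mapMatrix (hitMatrix A (PmatPoly r c)) =
      hitMatrix A (Pmat r c ε) := by
  ext i j
  simp only [hitMatrix, RingHom.mapMatrix_apply, Matrix.map_apply, Matrix.of_apply]
  split_ifs <;> simp [PmatPoly, Pmat] <;> ring

lemma sum_Pmat {V : Type*} [Fintype V] {r : V → V → ℝ} (c : V → V → ℝ)
    (hr1 : ∀ i, ∑ j, r i j = 1) (ε : ℝ) (i : V) : ∑ j, Pmat r c ε i j = 1 := by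
  simp only [Pmat, Finset.sum_add_distrib, ← Finset.mul_sum, hr1]
  rw [← rowT]
  ring

lemma eventually_mul_rowT_lt_one {V : Type*} [Fintype V] (c : V → V → ℝ) :
    ∀ᶠ ε in 𝓝[>] (0 : ℝ), ∀ i, ε * rowT c i < 1 := by
  refine eventually_all.2 fun i => ?_
  have : Tendsto (fun ε : ℝ => ε * rowT c i) (𝓝 0) (𝓝 (0 * rowT c i)) :=
    tendsto_id.mul_const _
  rw [zero_mul] at this
  exact (this.mono_left nhdsWithin_le_nhds).eventually_lt_const one_pos


/-- for every ε-Markov chain with absorbing set `A` in which every state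
has a path to `A`, and every `S ⊆ A` and state `i`, the limit `lim_{ε→0⁺} h_{iS}(ε)`
of the hitting probabilities exists. -/
theorem limit_hitProb_exists
    {V : Type*} [Fintype V] (r c : V → V → ℝ) (A : Set V)
    (hr0 : ∀ i j, 0 ≤ r i j) (hr1 : ∀ i, ∑ j, r i j = 1)
    (hc0 : ∀ i j, 0 ≤ c i j)
    (hAr : ∀ i ∈ A, r i i = 1) (hAc : ∀ i ∈ A, ∀ j, c i j = 0)
    (hpath : ∀ i, ∃ l : List V, IsPathToA r c A i l)
    (S : Set V) (hS : S ⊆ A) (i : V) :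
    ∃ L : ℝ, Filter.Tendsto (fun ε => hitProb (Pmat r c ε) A S i) (𝓝[>] (0:ℝ)) (𝓝 L) := by
  have hsmall : ∀ᶠ ε in 𝓝[>] (0 : ℝ), 0 < ε ∧ ∀ i, ε * rowT c i < 1 :=
    Filter.Eventually.and self_mem_nhdsWithin (eventually_mul_rowT_lt_one c)
  have hM : ∀ ε : ℝ, (0 < ε ∧ ∀ i, ε * rowT c i < 1) → ∀ i j, 0 ≤ Pmat r c ε i j :=
    fun ε hε i j => add_nonneg (mul_nonneg (sub_nonneg.2 (hε.2 i).le) (hr0 i j))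
      (mul_nonneg hε.1.le (hc0 i j))
  have hpos : ∀ ε : ℝ, (0 < ε ∧ ∀ i, ε * rowT c i < 1) →
      ∀ a b, RegEdge r a b ∨ EpsEdge r c a b → 0 < Pmat r c ε a b := by
    rintro ε hε a b (h | ⟨-, h⟩)
    · exact add_pos_of_pos_of_nonneg (mul_pos (sub_pos.2 (hε.2 a)) h)
        (mul_nonneg hε.1.le (hc0 a b))
    · exact add_pos_of_nonneg_of_pos (mul_nonneg (sub_nonneg.2 (hε.2 a).le) (hr0 a b))
        (mul_pos hε.1 h)
  -- `p` is the determinant of the system and `q` the adjugate applied to its right-hand side.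
  set B := hitMatrix A (PmatPoly r c) with hB
  let q : Polynomial ℝ := ∑ j, B.adjugate i j * if j ∈ S then 1 else 0
  have heval : ∀ ε : ℝ, B.det.eval ε = (hitMatrix A (Pmat r c ε)).det := fun ε => by
    rw [← mapMatrix_hitMatrix_PmatPoly, ← RingHom.map_det, Polynomial.coe_evalRingHom]
  have hp : B.det ≠ 0 := by
    obtain ⟨ε, hε⟩ := hsmall.exists
    intro h0
    refine hitMatrix_det_ne_zero (hM ε hε) (sum_Pmat c hr1 ε) (hpos ε hε) hpath ?_
    rw [← heval, h0, Polynomial.eval_zero]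
  refine exists_tendsto_of_mul_eval_eq
    (hsmall.mono fun ε hε => hitProb_nonneg (hM ε hε) A S i)
    (hsmall.mono fun ε hε => hitProb_le_one (hM ε hε) (sum_Pmat c hr1 ε) hS i)
    B.det.natDegree B.det q hp le_rfl (hsmall.mono fun ε hε => ?_)
  have hsys := congrArg (fun w => (hitMatrix A (Pmat r c ε)).adjugate.mulVec w i)
    (hitMatrix_mulVec_hitProb (hM ε hε) (sum_Pmat c hr1 ε) hS)
  simp only [Matrix.mulVec_mulVec, Matrix.adjugate_mul, Matrix.smul_mulVec, Matrix.one_mulVec,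
    Pi.smul_apply, smul_eq_mul] at hsys
  rw [heval, mul_comm, hsys, ← mapMatrix_hitMatrix_PmatPoly, ← RingHom.map_adjugate]
  simp only [q, Matrix.mulVec, dotProduct, Polynomial.eval_finsetSum, Polynomial.eval_mul]
  refine Finset.sum_congr rfl fun j _ => ?_
  split_ifs <;> simp [hB]

end
end

section
/- Let V be a finite set, U : V → ℝ, and let v₀, v₁, …, v_{n−1} be an enumeration of V sorted so that U v₀ ≤ U v₁ ≤ … ≤ U v_{n−1}. Let T be the relation on V consisting of the pairs (v_k, v_{k+1}) for all 0 ≤ k < n−1, together with the pairs (v_{k+1}, v_k) for every k with U v_k = U v_{k+1}. Then the reflexive–transitive closure of T equals the relation {(u, v) : U u ≤ U v}. (This is the correctness of the linear-size sparse graph used to compute the sink equilibria of a normal-form game: along each line of the better-or-equal response graph, replacing all better-or-equal response edges by successor edges in sorted order plus tie back-edges preserves the transitive closure, hence the strongly connected components.) -/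
/-!
Every edge weakly increases `U`, hence so does every path. Conversely, let `U (v i) ≤ U (v j)`.
If `i ≤ j`, the successor edges lead from `v i` up to `v j`. If `j ≤ i`, sortedness forces `U` to
be constant on `v j, …, v i`, so every tie back-edge on that stretch is present and these lead
from `v i` down to `v j`.
-/

/-- correctness of the linear-size sparse graph along a line of the
better-or-equal response graph. Let `v : Fin n ≃ V` enumerate `V` in nondecreasing order
of `U`, and let `T` consist of the successor edges `(v k, v (k+1))` for `k < n − 1`
together with the tie back-edges `(v (k+1), v k)` whenever `U (v k) = U (v (k+1))`.
Then the reflexive–transitive closure of `T` is exactly `{(u, v) : U u ≤ U v}`. -/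
theorem sorted_successor_graph_transitive_closure
    {V : Type*} [Fintype V] (U : V → ℝ) (n : ℕ) (v : Fin n ≃ V)
    (hsort : Monotone fun k => U (v k)) :
    Relation.ReflTransGen
      (fun a b =>
        ∃ (k : ℕ) (hk : k + 1 < n),
          (a = v ⟨k, Nat.lt_of_succ_lt hk⟩ ∧ b = v ⟨k + 1, hk⟩) ∨
          (U (v ⟨k, Nat.lt_of_succ_lt hk⟩) = U (v ⟨k + 1, hk⟩) ∧
            a = v ⟨k + 1, hk⟩ ∧ b = v ⟨k, Nat.lt_of_succ_lt hk⟩)) =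
      fun a b => U a ≤ U b := by
  funext a b
  apply propext
  constructor
  · intro h
    induction h with
    | refl => exact le_rfl
    | tail _ hstep ih =>
      obtain ⟨k, hk, ⟨rfl, rfl⟩ | ⟨hU, rfl, rfl⟩⟩ := hstep
      · exact ih.trans (hsort (Fin.mk_le_mk.mpr k.le_succ))
      · exact ih.trans hU.ge
  · obtain ⟨⟨i, hi⟩, rfl⟩ := v.surjective a
    obtain ⟨⟨j, hj⟩, rfl⟩ := v.surjective b
    intro h
    rcases le_total i j with hij | hji
    · clear h
      induction j, hij using Nat.le_induction with
      | base => exact .refl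
      | succ m _ ih => exact .tail (ih (by lia)) ⟨m, hj, .inl ⟨rfl, rfl⟩⟩
    · induction i, hji using Nat.le_induction with
      | base => exact .refl
      | succ m hm ih =>
        have hm' : m < n := Nat.lt_of_succ_lt hi
        -- Sortedness gives `U (v j) ≤ U (v m) ≤ U (v (m + 1))`, and `h` closes the cycle.
        have h₁ : U (v ⟨j, hj⟩) ≤ U (v ⟨m, hm'⟩) := hsort (Fin.mk_le_mk.mpr hm)
        have h₂ : U (v ⟨m, hm'⟩) ≤ U (v ⟨m + 1, hi⟩) := hsort (Fin.mk_le_mk.mpr m.le_succ)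
        exact .head ⟨m, hi, .inr ⟨h₂.antisymm (h.trans h₁), rfl, rfl⟩⟩ (ih hm' (h₂.trans h))
end
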